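/- Fix an integer k ≥ 2, pairwise distinct rationals μ_1,…,μ_k, and an integer n_0, and define p̄_i ∈ ℚ[n] for 1 ≤ i ≤ k by p̄_i(n) = Σ_{ℓ=0}^{k} (−2)^ℓ (n−1−ℓ)_{k−ℓ} · e_ℓ(μ_1(n−n_0),…,μ_i(n−n_0)−1,…,μ_k(n−n_0)). Then already the k−1 difference polynomials p̄_1 − p̄_i, for 2 ≤ i ≤ k, span a ℚ-linear subspace of ℚ[n] of dimension at least k−2. -/

import Mathlib

open Polynomial

/-- `pbar k μ n0 i` is the polynomial
`p̄_i(n) = Σ_{ℓ=0}^{k} (−2)^ℓ (n−1−ℓ)_{k−ℓ} ·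
  e_ℓ(μ_1(n−n_0),…,μ_i(n−n_0)−1,…,μ_k(n−n_0)) ∈ ℚ[n]`,
where `(n−1−ℓ)_{k−ℓ} = Π_{t=0}^{k−ℓ−1} (n−1−ℓ−t)`. -/
noncomputable def pbar (k : ℕ) (μ : Fin k → ℚ) (n0 : ℚ) (i : Fin k) : ℚ[X] :=
  ∑ l ∈ Finset.range (k + 1),
    (-2 : ℚ[X]) ^ l *
      (∏ t ∈ Finset.range (k - l), (X - C ((1 + l + t : ℕ) : ℚ))) *
      ∑ S ∈ Finset.powersetCard l (Finset.univ : Finset (Fin k)),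
        ∏ m ∈ S, (C (μ m) * (X - C n0) - if m = i then 1 else 0)

/-- Polynomials with distinct vanishing orders at `r` are linearly independent. -/
lemma aux_indep {N : ℕ} (r : ℚ) (a : Fin N → ℕ) (ha : Function.Injective a)
    (u v : Fin N → ℚ[X]) (hu : ∀ i, (u i).eval r ≠ 0)
    (hv : ∀ i, v i = (X - C r) ^ a i * u i) : LinearIndependent ℚ v := by
  classical
  rw [Fintype.linearIndependent_iff]
  intro c hc
  by_contra! hne
  obtain ⟨i1, hi1⟩ := hne
  obtain ⟨i0, hi0, hmin⟩ := Finset.exists_min_image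
    (Finset.univ.filter fun i => c i ≠ 0) a ⟨i1, by simpa using hi1⟩
  have hi0' : c i0 ≠ 0 := by simpa using hi0
  have h := congrArg (fun p => (taylor r p).coeff (a i0)) hc
  have key : ∀ i, (taylor r (v i)).coeff (a i0)
      = if a i ≤ a i0 then (taylor r (u i)).coeff (a i0 - a i) else 0 := by
    intro i
    rw [hv i, taylor_mul, taylor_pow]
    have : taylor r (X - C r) = X := by simp
    rw [this, coeff_X_pow_mul']
  simp only [map_sum, map_smul, finsetSum_coeff, coeff_smul, key, smul_eq_mul, map_zero,
    coeff_zero] at h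
  rw [Finset.sum_eq_single i0] at h
  · simp [hi0', taylor_coeff_zero, hu i0] at h
  · intro i _ hi
    by_cases hci : c i = 0
    · simp [hci]
    · have h1 := hmin i (by simpa using hci)
      have h2 : a i ≠ a i0 := fun h => hi (ha h)
      rw [if_neg (by omega), mul_zero]
  · simp

/-- falling factorial coefficient -/
noncomputable def auxF (k l : ℕ) : ℚ[X] :=
  ∏ t ∈ Finset.range (k - l), (X - C ((1 + l + t : ℕ) : ℚ))

noncomputable def auxL (k : ℕ) (P : ℚ[X][X]) : ℚ[X] :=
  ∑ l ∈ Finset.range (k + 1), (-2 : ℚ[X]) ^ l * auxF k l * P.coeff (k - l)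

noncomputable def auxM (K : ℕ) (r : ℚ) : ℚ[X] →ₗ[ℚ] ℚ[X] where
  toFun P := ∑ j ∈ Finset.range (K + 1),
    P.coeff (K - j) • ((-2 : ℚ[X]) ^ (j + 2) * auxF (K + 2) (j + 2) * (X - C r) ^ j)
  map_add' P Q := by simp [add_smul, Finset.sum_add_distrib]
  map_smul' c P := by simp [mul_smul, Finset.smul_sum]

lemma auxL_sub (k : ℕ) (P Q : ℚ[X][X]) : auxL k (P - Q) = auxL k P - auxL k Q := by
  simp [auxL, mul_sub, Finset.sum_sub_distrib]

lemma auxL_C_mul (k : ℕ) (c : ℚ[X]) (Q : ℚ[X][X]) : auxL k (C c * Q) = c * auxL k Q := by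
  simp only [auxL, coeff_C_mul, Finset.mul_sum]
  exact Finset.sum_congr rfl fun _ _ => by ring

lemma pbar_eq (k : ℕ) (μ : Fin k → ℚ) (r : ℚ) (i : Fin k) :
    pbar k μ r i = auxL k (∏ m, (X + C (C (μ m) * (X - C r) - if m = i then 1 else 0))) := by
  unfold pbar auxL auxF
  refine Finset.sum_congr rfl fun l hl => ?_
  have hl' : l ≤ k := by simpa [Nat.lt_succ_iff] using hl
  rw [Finset.prod_X_add_C_coeff _ _ (by simp)]
  congr 2
  simp [Nat.sub_sub_self hl']

lemma auxL_eq_auxM (K : ℕ) (s : Finset (Fin (K + 2))) (hs : s.card = K) (μ : Fin (K + 2) → ℚ)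
    (r : ℚ) : auxL (K + 2) (∏ m ∈ s, (X + C (C (μ m) * (X - C r))))
      = auxM K r (∏ m ∈ s, (X + C (μ m))) := by
  have hdeg : (∏ m ∈ s, (X + C (C (μ m) * (X - C r)))).natDegree = K := by
    rw [natDegree_prod_of_monic _ _ fun m _ => monic_X_add_C _]
    rw [Finset.sum_congr rfl fun m _ => natDegree_X_add_C _]
    simp [hs]
  unfold auxL
  rw [Finset.sum_range_succ', Finset.sum_range_succ']
  rw [coeff_eq_zero_of_natDegree_lt (n := K + 2 - 0) (by rw [hdeg]; omega),
    coeff_eq_zero_of_natDegree_lt (n := K + 2 - (0 + 1)) (by rw [hdeg]; omega)]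
  simp only [mul_zero, add_zero]
  change _ = ∑ j ∈ Finset.range (K + 1), _
  refine Finset.sum_congr rfl fun j hj => ?_
  have hj' : j ≤ K := by simpa [Nat.lt_succ_iff] using hj
  have e : K + 2 - (j + 1 + 1) = K - j := by omega
  rw [e, Finset.prod_X_add_C_coeff _ _ (by omega), Finset.prod_X_add_C_coeff _ _ (by omega),
    hs, Nat.sub_sub_self hj']
  have : ∑ t ∈ Finset.powersetCard j s, ∏ i ∈ t, (C (μ i) * (X - C r))
      = C (∑ t ∈ Finset.powersetCard j s, ∏ i ∈ t, μ i) * (X - C r) ^ j := by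
    rw [map_sum, Finset.sum_mul]
    refine Finset.sum_congr rfl fun t ht => ?_
    rw [Finset.prod_mul_distrib, Finset.prod_const, (Finset.mem_powersetCard.1 ht).2, map_prod]
  rw [this, smul_eq_C_mul]
  ring

lemma diff_eq (K : ℕ) (μ : Fin (K + 2) → ℚ) (r : ℚ) (i : Fin (K + 2)) (hi : i ≠ 0) :
    pbar (K + 2) μ r 0 - pbar (K + 2) μ r i = (μ 0 - μ i) •
      ((X - C r) * auxM K r (∏ m ∈ (Finset.univ.erase 0).erase i, (X + C (μ m)))) := by
  have hmem : i ∈ (Finset.univ.erase (0 : Fin (K + 2))) := by simp [hi]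
  rw [← auxL_eq_auxM K _ (by rw [Finset.card_erase_of_mem hmem]; simp), pbar_eq, pbar_eq,
    ← auxL_sub, smul_eq_C_mul, ← mul_assoc, ← auxL_C_mul]
  congr 1
  have key : ∀ g : Fin (K + 2) → ℚ[X][X], ∏ m, g m
      = g 0 * (g i * ∏ m ∈ (Finset.univ.erase 0).erase i, g m) := by
    intro g
    rw [Finset.mul_prod_erase _ _ hmem, Finset.mul_prod_erase _ _ (Finset.mem_univ _)]
  rw [key, key]
  have h0 : ∏ m ∈ (Finset.univ.erase 0).erase i,
      (X + C (C (μ m) * (X - C r) - if m = 0 then 1 else 0))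
      = ∏ m ∈ (Finset.univ.erase 0).erase i, (X + C (C (μ m) * (X - C r))) := by
    refine Finset.prod_congr rfl fun m hm => ?_
    simp only [Finset.mem_erase] at hm
    simp [hm.2.1]
  have h1 : ∏ m ∈ (Finset.univ.erase 0).erase i,
      (X + C (C (μ m) * (X - C r) - if m = i then 1 else 0))
      = ∏ m ∈ (Finset.univ.erase 0).erase i, (X + C (C (μ m) * (X - C r))) := by
    refine Finset.prod_congr rfl fun m hm => ?_
    simp only [Finset.mem_erase] at hm
    simp [hm.1]
  rw [h0, h1]
  simp only [if_true, if_neg hi, if_neg hi.symm, map_sub, map_mul, map_one, map_zero, sub_zero]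
  ring

lemma mem_W (K : ℕ) (μ : Fin (K + 2) → ℚ) (hμ : Function.Injective μ) (r : ℚ) (W : Submodule ℚ ℚ[X])
    (hW : ∀ i : Fin (K + 2), i ≠ 0 → pbar (K + 2) μ r 0 - pbar (K + 2) μ r i ∈ W)
    (P : ℚ[X]) (hP : P.degree < (K + 1 : ℕ)) : (X - C r) * auxM K r P ∈ W := by
  have hinj : Set.InjOn (fun i => - μ i) (Finset.univ.erase (0 : Fin (K + 2)) : Finset _) :=
    fun a _ b _ h => hμ (neg_injective h)
  have h := Lagrange.eq_interpolate (s := Finset.univ.erase (0 : Fin (K + 2)))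
    (v := fun i => - μ i) (f := P) hinj (by simpa using hP)
  rw [h, Lagrange.interpolate_apply, map_sum, Finset.mul_sum]
  refine Submodule.sum_mem _ fun i hi => ?_
  have hi0 : i ≠ 0 := by simpa using hi
  have hb : Lagrange.basis (Finset.univ.erase (0 : Fin (K + 2))) (fun i => - μ i) i
      = C (∏ m ∈ (Finset.univ.erase 0).erase i, (- μ i - - μ m)⁻¹)
        * ∏ m ∈ (Finset.univ.erase 0).erase i, (X + C (μ m)) := by
    unfold Lagrange.basis Lagrange.basisDivisor
    rw [Finset.prod_mul_distrib, map_prod]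
    simp
  rw [hb, ← smul_eq_C_mul, ← smul_eq_C_mul, map_smul, map_smul, mul_smul_comm, mul_smul_comm]
  refine W.smul_mem _ (W.smul_mem _ ?_)
  have := hW i hi0
  rw [diff_eq K μ r i hi0] at this
  exact (W.smul_mem_iff (sub_ne_zero.2 fun h => hi0 (hμ h).symm)).1 this

lemma auxM_X_pow (K : ℕ) (r : ℚ) (j : ℕ) (hj : j ≤ K) :
    auxM K r (X ^ (K - j)) = (-2 : ℚ[X]) ^ (j + 2) * auxF (K + 2) (j + 2) * (X - C r) ^ j := by
  change ∑ j ∈ Finset.range (K + 1), _ = _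
  rw [Finset.sum_eq_single j]
  · simp
  · intro b hb hbj
    rw [Finset.mem_range] at hb
    rw [coeff_X_pow, if_neg (by omega), zero_smul]
  · intro h; exact absurd (Finset.mem_range.2 (by omega)) h

lemma auxF_eval (K j : ℕ) (n0 : ℤ) (h : ∀ t < K - j, n0 ≠ 3 + j + t) :
    (auxF (K + 2) (j + 2)).eval (n0 : ℚ) ≠ 0 := by
  unfold auxF
  rw [eval_prod, Finset.prod_ne_zero_iff]
  intro t ht
  rw [Finset.mem_range] at ht
  have := h t (by omega)
  simp only [eval_sub, eval_X, eval_C]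
  rw [sub_ne_zero]
  intro h'
  apply this
  have : n0 = ((1 + (j + 2) + t : ℕ) : ℤ) := by exact_mod_cast h'
  rw [this]; push_cast; ring

lemma exists_choice (K : ℕ) (n0 : ℤ) : ∃ (j a : Fin K → ℕ) (u : Fin K → ℚ[X]),
    (∀ i, j i ≤ K) ∧ Function.Injective a ∧ (∀ i, (u i).eval (n0 : ℚ) ≠ 0) ∧
    ∀ i, auxF (K + 2) (j i + 2) * (X - C (n0 : ℚ)) ^ j i = (X - C (n0 : ℚ)) ^ a i * u i := by
  by_cases hn : 3 ≤ n0 ∧ n0 ≤ K + 2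
  · obtain ⟨d, rfl⟩ : ∃ d : ℕ, n0 = d + 3 := ⟨(n0 - 3).toNat, by omega⟩
    have hd : d < K := by omega
    refine ⟨fun i => if (i : ℕ) < d then i else i + 1, fun i => i + 1,
      fun i => if (i : ℕ) < d then ∏ t ∈ (Finset.range (K - i)).erase (d - i),
        (X - C ((1 + (i + 2) + t : ℕ) : ℚ)) else auxF (K + 2) (i + 1 + 2), ?_, ?_, ?_, ?_⟩
    · intro i; have := i.2; dsimp only; split_ifs <;> omega
    · intro a b h; ext; simpa using h
    · intro i
      dsimp only
      split_ifs with h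
      · rw [eval_prod, Finset.prod_ne_zero_iff]
        intro t ht
        simp only [Finset.mem_erase, Finset.mem_range] at ht
        simp only [eval_sub, eval_X, eval_C]
        rw [sub_ne_zero]
        intro h'
        have : d + 3 = 1 + (i + 2) + t := by exact_mod_cast h'
        omega
      · apply auxF_eval
        intro t _
        omega
    · intro i
      dsimp only
      split_ifs with h
      · unfold auxF
        have e : K + 2 - (i + 2) = K - i := by omega
        have e2 : 1 + ((i : ℕ) + 2) + (d - i) = d + 3 := by omega
        rw [e, ← Finset.mul_prod_erase _ _ (Finset.mem_range.2 (by omega : d - (i : ℕ) < K - i)),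
          e2]
        push_cast
        ring
      · ring
  · refine ⟨fun i => i, fun i => i, fun i => auxF (K + 2) (i + 2), ?_, ?_, ?_, ?_⟩
    · intro i; exact i.2.le
    · exact Fin.val_injective
    · intro i
      apply auxF_eval
      intro t ht h
      omega
    · intro i; ring

/-- For `k ≥ 2`, pairwise distinct rationals `μ_1,…,μ_k` and an integer `n_0`,
already the `k − 1` difference polynomials `p̄_1 − p̄_i` (for `2 ≤ i ≤ k`) span a
ℚ-linear subspace of `ℚ[n]` of dimension at least `k − 2`. -/
theorem stmt13 (k : ℕ) (hk : 2 ≤ k) (μ : Fin k → ℚ) (hμ : Function.Injective μ)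
    (n0 : ℤ) :
    k - 2 ≤ Module.finrank ℚ
      (Submodule.span ℚ
        ((fun i : Fin k =>
            pbar k μ (n0 : ℚ) ⟨0, by omega⟩ - pbar k μ (n0 : ℚ) i) ''
          {i : Fin k | 1 ≤ (i : ℕ)})) := by
  obtain ⟨K, rfl⟩ : ∃ K, k = K + 2 := ⟨k - 2, by omega⟩
  generalize hWd : Submodule.span ℚ
        ((fun i : Fin (K + 2) =>
            pbar (K + 2) μ (n0 : ℚ) ⟨0, by omega⟩ - pbar (K + 2) μ (n0 : ℚ) i) ''
          {i : Fin (K + 2) | 1 ≤ (i : ℕ)}) = W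
  have hfin : Module.Finite ℚ W := by
    rw [← hWd]
    exact Module.Finite.span_of_finite ℚ ((Set.toFinite _).image _)
  have hW : ∀ i : Fin (K + 2), i ≠ 0 →
      pbar (K + 2) μ (n0 : ℚ) 0 - pbar (K + 2) μ (n0 : ℚ) i ∈ W := by
    intro i hi
    rw [← hWd]
    apply Submodule.subset_span
    refine ⟨i, ?_, rfl⟩
    have : (i : ℕ) ≠ 0 := fun h => hi (Fin.ext h)
    simp only [Set.mem_setOf_eq]
    omega
  obtain ⟨j, a, u, hj, ha, hu, hf⟩ := exists_choice K n0
  have hmem : ∀ i, (X - C (n0 : ℚ)) * auxM K n0 (X ^ (K - j i)) ∈ W := fun i =>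
    mem_W K μ hμ n0 W hW _ (by
      rw [degree_X_pow]; exact_mod_cast (by omega : K - j i < K + 1))
  have hli : LinearIndependent ℚ (fun i => (X - C (n0 : ℚ)) * auxM K n0 (X ^ (K - j i))) := by
    refine aux_indep (n0 : ℚ) (fun i => a i + 1) (fun x y h => ha (by simpa using h))
      (fun i => (-2 : ℚ[X]) ^ (j i + 2) * u i) _ ?_ ?_
    · intro i
      simp [hu i]
    · intro i
      rw [auxM_X_pow _ _ _ (hj i), mul_assoc, hf i]
      ring
  have hli' : LinearIndependent ℚ (fun i => (⟨_, hmem i⟩ : W)) :=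
    LinearIndependent.of_comp W.subtype hli
  simpa using hli'.fintype_card_le_finrank
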